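/- Let θ be a cylindric diagram in C_ω and let [e, w_θ) denote [e, w_{θ,T}) for any standard tableau T ∈ LE(θ) (independent of T). Then [e, w_θ) = {w ∈ W : w is P_θ-pluscule}, i.e. an element w of the affine Weyl group W lies in [e, w_θ) if and only if ⟨P_θ, α^∨⟩ = −1 for every α in the inversion set R(w). -/

import Mathlib

/-!
`P_θ` is a level-zero minuscule weight, and the theorem compares two ways of reading words
`i₁ ⋯ iₙ` that satisfy `⟨s_{i_{k-1}} ⋯ s_{i₁} P_θ, α_{i_k}^∨⟩ = -1` for every `k`, called *good*
words below (`GoodWord`).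

*Weyl group side.* Real roots are differences `E b - E a` of vectors indexed by integers, on which
`s_i` acts by an affine permutation of the indices (`sFun_rootE_sub`). Hence every real root is
positive or negative, and `α_j` is the only positive root made negative by `s_j`
(`eq_alpha_of_sFun_neg`). This yields the exchange property and monotonicity of inversion sets
along the weak order. Since the inversions of `s_{i₁} ⋯ s_{iₙ}` are among the roots
`s_{i₁} ⋯ s_{i_{k-1}} α_{i_k}`, an element with a good word is `P_θ`-pluscule
(`pairCo_of_mem_invSet`), every reduced word of a pluscule element is good (`exists_goodWord`), and
good words are reduced (`wble_of_goodWord`).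

*Diagram side.* A cylindric diagram is described by its profile `H : ℤ → ℤ`, and the coefficients
of `P_θ` are the second differences of `H` (`Rep.aC_eq`). So `P_θ` may be replaced by a weight
`ζ = ∑ h_i α_i` built from `H`. Removing a minimal cell of content `i` from `θ` adds `α_i` to `ζ`,
which is `s_i ζ` because the pairing is `-1` (`Wt.step`); thus all words of a standard tableau are
good, and each letter occurs in them infinitely often (`exists_subperm_tabWord`).

*Conclusion.* Elements below a tableau word have smaller inversion sets, so they are pluscule.
Conversely, a pluscule element has a good word `L`, whose letters all occur, with multiplicity, in
some tableau word `N`. Two letters admissible for the same minuscule weight are equal or commute,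
so the letters of `L` can be moved to the front of `N` one after the other
(`exists_completion`); this exhibits `N` as a reduced product beginning with `L`.
-/

namespace CylPaper

/-! ## The cylinder and its order -/

abbrev Z2 : Type := ℤ × ℤ

/-- The partial order on ℤ²: (a,b) ≤ (c,d) iff a ≥ c and b ≥ d. -/
def le2 (x y : Z2) : Prop := y.1 ≤ x.1 ∧ y.2 ≤ x.2

/-- The period ω = (m, -ℓ). -/
def om (m l : ℕ) : Z2 := ((m : ℤ), -(l : ℤ))

/-- The cylinder C_ω = ℤ²/ℤω. -/
abbrev Cyl (m l : ℕ) : Type := Z2 ⧸ AddSubgroup.zmultiples (om m l)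

/-- The natural projection π : ℤ² → C_ω. -/
def pr (m l : ℕ) : Z2 →+ Cyl m l := QuotientAddGroup.mk' _

/-- The induced order relation on the cylinder: x ≤ y iff there are lifts with x̃ ≤ ỹ. -/
def cle (m l : ℕ) (x y : Cyl m l) : Prop :=
  ∃ a b : Z2, pr m l a = x ∧ pr m l b = y ∧ le2 a b

/-- A cylindric diagram: a non-trivial order filter of C_ω. -/
def IsCylindric (m l : ℕ) (θ : Set (Cyl m l)) : Prop :=
  θ.Nonempty ∧ θ ≠ Set.univ ∧ ∀ x ∈ θ, ∀ y, cle m l x y → y ∈ θ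

/-- A periodic diagram of period ω: a non-trivial order filter of ℤ² with Θ + ω = Θ. -/
def IsPeriodic (m l : ℕ) (Θ : Set Z2) : Prop :=
  Θ.Nonempty ∧ Θ ≠ Set.univ ∧ (∀ x ∈ Θ, ∀ y, le2 x y → y ∈ Θ) ∧
    (fun p => p + om m l) '' Θ = Θ

/-- A proper order ideal ξ of the sub-poset θ of C_ω. -/
def IsProperIdealOf (m l : ℕ) (θ ξ : Set (Cyl m l)) : Prop :=
  ξ ⊆ θ ∧ ξ ≠ θ ∧ ∀ x ∈ ξ, ∀ y ∈ θ, cle m l y x → y ∈ ξ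

/-- A proper order ideal of the whole cylinder C_ω. -/
def IsProperIdealC (m l : ℕ) (J : Set (Cyl m l)) : Prop :=
  J ≠ Set.univ ∧ ∀ x ∈ J, ∀ y, cle m l y x → y ∈ J

/-- A proper order filter of the whole cylinder C_ω. -/
def IsProperFilterC (m l : ℕ) (J : Set (Cyl m l)) : Prop :=
  J ≠ Set.univ ∧ ∀ x ∈ J, ∀ y, cle m l x y → y ∈ J

/-! ## The content map -/

/-- The content on ℤ²: (a,b) ↦ b - a mod κ (κ = m + ℓ). -/
def conHom (m l : ℕ) : Z2 →+ ZMod (m + l) where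
  toFun p := ((p.2 - p.1 : ℤ) : ZMod (m + l))
  map_zero' := by simp
  map_add' a b := by
    simp only [Prod.fst_add, Prod.snd_add]
    push_cast
    ring

lemma conHom_om (m l : ℕ) : conHom m l (om m l) = 0 := by
  have h : ((m + l : ℕ) : ZMod (m + l)) = 0 := ZMod.natCast_self _
  show ((((om m l).2 - (om m l).1 : ℤ)) : ZMod (m + l)) = 0
  simp only [om]
  push_cast at h ⊢
  linear_combination -h

/-- The content map con : C_ω → ℤ/κℤ. -/
def con (m l : ℕ) : Cyl m l →+ ZMod (m + l) :=
  QuotientAddGroup.lift _ (conHom m l) (by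
    intro x hx
    obtain ⟨k, rfl⟩ := AddSubgroup.mem_zmultiples_iff.mp hx
    simp only [AddMonoidHom.mem_ker, map_zsmul, conHom_om, smul_zero])

/-! ## The affine root system of type A_{κ-1}^{(1)} -/

/-- h*, with coordinates in the basis {α_i (i ∈ ℤ/κℤ), Λ₀}:
`(c, t)` stands for `Σ_i c_i α_i + t Λ₀`. -/
abbrev Hw (κ : ℕ) : Type := (ZMod κ → ℚ) × ℚ

/-- The affine Cartan matrix of type A_{κ-1}^{(1)} (valid for κ ≥ 2). -/
def cartan (κ : ℕ) (i j : ZMod κ) : ℚ :=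
  (if i = j then 2 else 0) + (if i - j = 1 then -1 else 0) + (if i - j = -1 then -1 else 0)

/-- The simple root α_i. -/
def alphaR (κ : ℕ) (i : ZMod κ) : Hw κ := (Pi.single i 1, 0)

/-- The null root δ = Σ_i α_i. -/
def deltaR (κ : ℕ) : Hw κ := (fun _ => 1, 0)

/-- The pairing ⟨ζ, α_i^∨⟩. -/
noncomputable def pairSimple (κ : ℕ) (ζ : Hw κ) (i : ZMod κ) : ℚ :=
  (∑ᶠ j, ζ.1 j * cartan κ i j) + ζ.2 * (if i = 0 then 1 else 0)

/-- The pairing ⟨ζ, β^∨⟩ where β = Σ_i k_i α_i lies in the root lattice,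
so β^∨ = Σ_i k_i α_i^∨. -/
noncomputable def pairCo (κ : ℕ) (ζ β : Hw κ) : ℚ := ∑ᶠ i, β.1 i * pairSimple κ ζ i

/-- The simple reflection s_i : ζ ↦ ζ - ⟨ζ, α_i^∨⟩ α_i, as a map on h*. -/
noncomputable def sFun (κ : ℕ) (i : ZMod κ) (ζ : Hw κ) : Hw κ :=
  ζ - pairSimple κ ζ i • alphaR κ i

/-- The element s_{i₁} s_{i₂} ⋯ s_{i_r} of the affine Weyl group
given by a word [i₁, i₂, …, i_r]. -/
noncomputable def wordProd (κ : ℕ) (L : List (ZMod κ)) : Hw κ → Hw κ :=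
  (L.map (sFun κ)).foldr (· ∘ ·) id

/-- Membership in the affine Weyl group W (generated by the s_i). -/
def Wmem (κ : ℕ) (w : Hw κ → Hw κ) : Prop := ∃ L : List (ZMod κ), wordProd κ L = w

/-- The Coxeter length: the least r such that w is a product of r simple reflections. -/
noncomputable def len (κ : ℕ) (w : Hw κ → Hw κ) : ℕ :=
  sInf {r : ℕ | ∃ L : List (ZMod κ), L.length = r ∧ wordProd κ L = w}

/-- Q₊ = Σ_i ℤ≥0 α_i. -/
def QPos (κ : ℕ) : Set (Hw κ) := {x | x.2 = 0 ∧ ∀ i, ∃ n : ℕ, x.1 i = (n : ℚ)}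

/-- The set R = WΠ of real roots. -/
def Rset (κ : ℕ) : Set (Hw κ) :=
  {β | ∃ (L : List (ZMod κ)) (i : ZMod κ), β = wordProd κ L (alphaR κ i)}

/-- Positive real roots R₊ = R ∩ Q₊. -/
def Rpos (κ : ℕ) : Set (Hw κ) := Rset κ ∩ QPos κ

/-- Negative real roots R₋ = -R₊. -/
def Rneg (κ : ℕ) : Set (Hw κ) := {β | -β ∈ Rpos κ}

/-- The inversion set R(w) = R₊ ∩ w R₋. -/
def invSet (κ : ℕ) (w : Hw κ → Hw κ) : Set (Hw κ) := Rpos κ ∩ (w '' Rneg κ)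

/-- The weak right Bruhat order on W. -/
def wble (κ : ℕ) (v w : Hw κ → Hw κ) : Prop :=
  Relation.ReflTransGen
    (fun u u' => ∃ i : ZMod κ, u' = u ∘ sFun κ i ∧ len κ u' = len κ u + 1) v w

/-- The weak Bruhat interval [e, w]. -/
def bint (κ : ℕ) (w : Hw κ → Hw κ) : Set (Hw κ → Hw κ) :=
  {x | wble κ id x ∧ wble κ x w}

/-- A single commutation move on words: swap adjacent letters i, j with i - j ≠ 0, ±1. -/
def CommMove (κ : ℕ) (L1 L2 : List (ZMod κ)) : Prop :=
  ∃ (u v : List (ZMod κ)) (i j : ZMod κ),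
    i - j ≠ 0 ∧ i - j ≠ 1 ∧ i - j ≠ -1 ∧
    L1 = u ++ i :: j :: v ∧ L2 = u ++ j :: i :: v

/-- A word is reduced if its length equals the Coxeter length of its product. -/
def IsReducedWord (κ : ℕ) (L : List (ZMod κ)) : Prop :=
  len κ (wordProd κ L) = L.length

/-- Fully commutative: any reduced word for w can be obtained from any other
using only commutation moves. -/
def FullyComm (κ : ℕ) (w : Hw κ → Hw κ) : Prop :=
  ∀ L1 L2 : List (ZMod κ),
    IsReducedWord κ L1 → wordProd κ L1 = w →
    IsReducedWord κ L2 → wordProd κ L2 = w →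
    Relation.ReflTransGen (CommMove κ) L1 L2

/-! ## Hooks, bottom set and weights attached to a cylindric diagram -/

/-- α(x) = α_{con(x)}. -/
def alC (m l : ℕ) (x : Cyl m l) : Hw (m + l) := alphaR (m + l) (con m l x)

/-- arm(x) = {x + π(0,k) : k ≥ 1} ∩ θ. -/
def armSet (m l : ℕ) (θ : Set (Cyl m l)) (x : Cyl m l) : Set (Cyl m l) :=
  {y | y ∈ θ ∧ ∃ k : ℕ, 1 ≤ k ∧ y = x + pr m l (0, (k : ℤ))}

/-- leg(x) = {x + π(k,0) : k ≥ 1} ∩ θ. -/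
def legSet (m l : ℕ) (θ : Set (Cyl m l)) (x : Cyl m l) : Set (Cyl m l) :=
  {y | y ∈ θ ∧ ∃ k : ℕ, 1 ≤ k ∧ y = x + pr m l ((k : ℤ), 0)}

/-- The colored hook length hk(x) = α(x) + Σ_{y∈arm(x)} α(y) + Σ_{y∈leg(x)} α(y). -/
noncomputable def hk (m l : ℕ) (θ : Set (Cyl m l)) (x : Cyl m l) : Hw (m + l) :=
  alC m l x + (∑ᶠ y ∈ armSet m l θ x, alC m l y) + (∑ᶠ y ∈ legSet m l θ x, alC m l y)

/-- x is the minimum cell b_i of content i in θ. -/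
def IsBottomCell (m l : ℕ) (θ : Set (Cyl m l)) (i : ZMod (m + l)) (x : Cyl m l) : Prop :=
  x ∈ θ ∧ con m l x = i ∧ ∀ y ∈ θ, con m l y = i → cle m l x y

/-- The bottom set Γ = {b_i : i ∈ ℤ/κℤ}. -/
def btm (m l : ℕ) (θ : Set (Cyl m l)) : Set (Cyl m l) :=
  {x | ∃ i, IsBottomCell m l θ i x}

/-- The maximal elements Γ_max of the bottom set. -/
def btmMax (m l : ℕ) (θ : Set (Cyl m l)) : Set (Cyl m l) :=
  {x | x ∈ btm m l θ ∧ ∀ y ∈ btm m l θ, cle m l x y → y = x}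

/-- The minimal elements Γ_min of the bottom set. -/
def btmMin (m l : ℕ) (θ : Set (Cyl m l)) : Set (Cyl m l) :=
  {x | x ∈ btm m l θ ∧ ∀ y ∈ btm m l θ, cle m l y x → y = x}

open Classical in
/-- The coefficient a_i of Λ_i in the predominant weight P_θ:
1 if b_i ∈ Γ_max, -1 if b_i ∈ Γ_min, 0 otherwise. -/
noncomputable def aC (m l : ℕ) (θ : Set (Cyl m l)) (i : ZMod (m + l)) : ℚ :=
  if ∃ x, IsBottomCell m l θ i x ∧ x ∈ btmMax m l θ then 1
  else if ∃ x, IsBottomCell m l θ i x ∧ x ∈ btmMin m l θ then -1 else 0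

/-- The pairing ⟨P_θ, β^∨⟩ = Σ_i a_i k_i for β = Σ_i k_i α_i,
where P_θ = Σ_i a_i Λ_i (since ⟨Λ_i, α_j^∨⟩ = δ_{ij} and ⟨Λ_i, d⟩ = 0). -/
noncomputable def pairP (m l : ℕ) (θ : Set (Cyl m l)) (β : Hw (m + l)) : ℚ :=
  ∑ᶠ i, aC m l θ i * β.1 i

/-- D(P_θ) = {α ∈ R₊ : ⟨P_θ, α^∨⟩ = -1}. -/
def DSet (m l : ℕ) (θ : Set (Cyl m l)) : Set (Hw (m + l)) :=
  {β | β ∈ Rpos (m + l) ∧ pairP m l θ β = -1}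

/-- The "inversion set" R(w_θ) = {hk(x) : x ∈ θ}. -/
def RwTheta (m l : ℕ) (θ : Set (Cyl m l)) : Set (Hw (m + l)) := hk m l θ '' θ

/-- The set Π_θ = Π_θ^0 ∪ Π_θ^arm ∪ Π_θ^leg. -/
def PiTheta (m l : ℕ) (θ : Set (Cyl m l)) : Set (Hw (m + l)) :=
  {v | ∃ x, x ∈ btm m l θ ∧ x ∉ btmMax m l θ ∧ x ∉ btmMin m l θ ∧ v = alC m l x} ∪
  {v | ∃ x, x ∈ btmMax m l θ ∧ v = alC m l x + ∑ᶠ y ∈ armSet m l θ x, alC m l y} ∪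
  {v | ∃ x, x ∈ btmMax m l θ ∧ v = alC m l x + ∑ᶠ y ∈ legSet m l θ x, alC m l y}

/-- The modified order ⊴ on R(w_θ): α ⊴ β iff β - α ∈ Σ_{γ∈Π_θ} ℤ≥0 γ. -/
def trile (m l : ℕ) (θ : Set (Cyl m l)) (α β : Hw (m + l)) : Prop :=
  β - α ∈ AddSubmonoid.closure (PiTheta m l θ)

/-! ## Standard tableaux (encoded by the inverse enumeration e = T⁻¹ : ℤ≥1 → θ) -/

/-- A standard tableau on θ, given by the enumeration e = T⁻¹ : {1,2,…} → θ.
This is precisely the data of an order-preserving bijection T : θ → ℤ≥1. -/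
def IsTableau (m l : ℕ) (θ : Set (Cyl m l)) (e : ℕ → Cyl m l) : Prop :=
  Set.InjOn e {a : ℕ | 1 ≤ a} ∧ e '' {a : ℕ | 1 ≤ a} = θ ∧
  ∀ a b : ℕ, 1 ≤ a → 1 ≤ b → cle m l (e a) (e b) → e a ≠ e b → a < b

/-- A standard tableau on a finite (skew) diagram ξ with |ξ| = n, encoded by
the enumeration e = S⁻¹ : {1,…,n} → ξ. -/
def IsTableauOn (m l : ℕ) (ξ : Set (Cyl m l)) (n : ℕ) (e : ℕ → Cyl m l) : Prop :=
  Set.InjOn e (Set.Icc 1 n) ∧ e '' Set.Icc 1 n = ξ ∧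
  ∀ a b : ℕ, a ∈ Set.Icc 1 n → b ∈ Set.Icc 1 n → cle m l (e a) (e b) → e a ≠ e b → a < b

/-- The word (con(e 1), con(e 2), …, con(e n)). -/
def tabWord (m l : ℕ) (e : ℕ → Cyl m l) (n : ℕ) : List (ZMod (m + l)) :=
  (List.range n).map (fun k => con m l (e (k + 1)))

/-- The semi-infinite Bruhat interval [e, w_{θ,T}) = ⋃_{n≥1} [e, w_{θ,T}[n]]. -/
def semiInt (m l : ℕ) (e : ℕ → Cyl m l) : Set (Hw (m + l) → Hw (m + l)) :=
  ⋃ n ∈ {n : ℕ | 1 ≤ n}, bint (m + l) (wordProd (m + l) (tabWord m l e n))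

/-- w is P_θ-pluscule: ⟨P_θ, α^∨⟩ = -1 for every α ∈ R(w). -/
def Pluscule (m l : ℕ) (θ : Set (Cyl m l)) (w : Hw (m + l) → Hw (m + l)) : Prop :=
  ∀ β ∈ invSet (m + l) w, pairP m l θ β = -1

/-- The generating relation of the heap order ⪯_T on ℤ≥1. -/
def heapRel (m l : ℕ) (e : ℕ → Cyl m l) (a b : ℕ) : Prop :=
  1 ≤ a ∧ a ≤ b ∧
    (con m l (e a) = con m l (e b) ∨
      sFun (m + l) (con m l (e a)) ∘ sFun (m + l) (con m l (e b)) ≠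
        sFun (m + l) (con m l (e b)) ∘ sFun (m + l) (con m l (e a)))

/-- The generating relation of the heap order ≤^hp on R(w_θ):
α ≤ β whenever β - α ∈ Q₊ (the ordinary order) and ⟨α, β^∨⟩ ≠ 0. -/
def hpRel (m l : ℕ) (θ : Set (Cyl m l)) (α β : Hw (m + l)) : Prop :=
  α ∈ RwTheta m l θ ∧ β ∈ RwTheta m l θ ∧ β - α ∈ QPos (m + l) ∧
    pairCo (m + l) α β ≠ 0

/-- v is the Weyl group element w_ξ of a proper order ideal ξ of θ. -/
def IsIdealWord (m l : ℕ) (θ ξ : Set (Cyl m l)) (v : Hw (m + l) → Hw (m + l)) : Prop :=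
  IsProperIdealOf m l θ ξ ∧
    ∃ n e, IsTableauOn m l ξ n e ∧ v = wordProd (m + l) (tabWord m l e n)

/-- A proper order ideal of the poset (R(w_θ), ⊴). -/
def IsProperIdealOfRw (m l : ℕ) (θ : Set (Cyl m l)) (J : Set (Hw (m + l))) : Prop :=
  J ⊆ RwTheta m l θ ∧ J ≠ RwTheta m l θ ∧
    ∀ β ∈ J, ∀ α ∈ RwTheta m l θ, trile m l θ α β → α ∈ J


/-! ### Simple reflections and the invariant pairing -/

section Weyl

set_option linter.unusedSectionVars false

variable {κ : ℕ} [NeZero κ] [Fact (1 < κ)]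

lemma pairSimple_eq (ζ : Hw κ) (i : ZMod κ) :
    pairSimple κ ζ i
      = 2 * ζ.1 i - ζ.1 (i - 1) - ζ.1 (i + 1) + ζ.2 * (if i = 0 then 1 else 0) := by
  have h1 : ∀ j : ZMod κ, (i - j = 1) ↔ (j = i - 1) := fun j =>
    ⟨fun h => by rw [← h]; ring, fun h => by rw [h]; ring⟩
  have h2 : ∀ j : ZMod κ, (i - j = -1) ↔ (j = i + 1) := fun j =>
    ⟨fun h => by linear_combination -h, fun h => by rw [h]; ring⟩
  have h3 : ∀ j : ZMod κ, (i = j) ↔ (j = i) := fun j => eq_comm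
  unfold pairSimple cartan
  rw [finsum_eq_sum_of_fintype]
  simp only [h1, h2, h3, mul_add, Finset.sum_add_distrib, mul_ite, mul_zero, mul_neg, mul_one,
    Finset.sum_ite_eq', Finset.mem_univ, if_true]
  ring

lemma pairSimple_add (ζ ξ : Hw κ) (i : ZMod κ) :
    pairSimple κ (ζ + ξ) i = pairSimple κ ζ i + pairSimple κ ξ i := by
  simp only [pairSimple_eq, Prod.fst_add, Prod.snd_add, Pi.add_apply]; ring

lemma pairSimple_smul (c : ℚ) (ζ : Hw κ) (i : ZMod κ) :
    pairSimple κ (c • ζ) i = c * pairSimple κ ζ i := by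
  simp only [pairSimple_eq, Prod.smul_fst, Prod.smul_snd, Pi.smul_apply, smul_eq_mul]; ring

lemma succ_ne (i : ZMod κ) : i + 1 ≠ i := by simp

lemma pred_ne (i : ZMod κ) : i - 1 ≠ i := by simp

lemma pairSimple_alpha_self (i : ZMod κ) : pairSimple κ (alphaR κ i) i = 2 := by
  simp [pairSimple_eq, alphaR]

lemma pairSimple_alpha_of_far {i k : ZMod κ} (h0 : k ≠ i) (h1 : k ≠ i + 1) (h2 : k ≠ i - 1) :
    pairSimple κ (alphaR κ i) k = 0 := by
  have h3 : k - 1 ≠ i := fun h => h1 (by rw [← h]; ring)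
  have h4 : k + 1 ≠ i := fun h => h2 (by rw [← h]; ring)
  simp [pairSimple_eq, alphaR, h0, h3, h4]

lemma sFun_add (i : ZMod κ) (ζ ξ : Hw κ) : sFun κ i (ζ + ξ) = sFun κ i ζ + sFun κ i ξ := by
  unfold sFun; rw [pairSimple_add, add_smul]; abel

lemma sFun_smul (i : ZMod κ) (c : ℚ) (ζ : Hw κ) : sFun κ i (c • ζ) = c • sFun κ i ζ := by
  unfold sFun; rw [pairSimple_smul, smul_sub, mul_smul]

lemma sFun_alpha (i : ZMod κ) : sFun κ i (alphaR κ i) = -alphaR κ i := by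
  unfold sFun; rw [pairSimple_alpha_self, two_smul]; abel

lemma sFun_sFun (i : ZMod κ) (ζ : Hw κ) : sFun κ i (sFun κ i ζ) = ζ := by
  have h : sFun κ i ζ = ζ + (-pairSimple κ ζ i) • alphaR κ i := by
    unfold sFun; rw [neg_smul]; abel
  rw [h, sFun_add, sFun_smul, sFun_alpha, h]
  simp

lemma sFun_comp_self (i : ZMod κ) : sFun κ i ∘ sFun κ i = id := funext (sFun_sFun i)

lemma sFun_snd (i : ZMod κ) (ζ : Hw κ) : (sFun κ i ζ).2 = ζ.2 := by simp [sFun, alphaR]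

lemma wordProd_nil : wordProd κ [] = id := rfl

lemma wordProd_cons (i : ZMod κ) (L : List (ZMod κ)) :
    wordProd κ (i :: L) = sFun κ i ∘ wordProd κ L := rfl

lemma wordProd_append (L L' : List (ZMod κ)) :
    wordProd κ (L ++ L') = wordProd κ L ∘ wordProd κ L' := by
  induction L with
  | nil => rfl
  | cons i L ih => rw [List.cons_append, wordProd_cons, wordProd_cons, ih]; rfl

lemma wordProd_singleton (i : ZMod κ) : wordProd κ [i] = sFun κ i := rfl

lemma wordProd_snoc (L : List (ZMod κ)) (i : ZMod κ) :
    wordProd κ (L ++ [i]) = wordProd κ L ∘ sFun κ i := by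
  rw [wordProd_append, wordProd_singleton]

lemma wordProd_add (L : List (ZMod κ)) (ζ ξ : Hw κ) :
    wordProd κ L (ζ + ξ) = wordProd κ L ζ + wordProd κ L ξ := by
  induction L with
  | nil => rfl
  | cons i L ih => simp only [wordProd_cons, Function.comp_apply, ih, sFun_add]

lemma wordProd_smul (L : List (ZMod κ)) (c : ℚ) (ζ : Hw κ) :
    wordProd κ L (c • ζ) = c • wordProd κ L ζ := by
  induction L with
  | nil => rfl
  | cons i L ih => simp only [wordProd_cons, Function.comp_apply, ih, sFun_smul]

lemma wordProd_neg (L : List (ZMod κ)) (ζ : Hw κ) :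
    wordProd κ L (-ζ) = -wordProd κ L ζ := by
  have := wordProd_smul L (-1) ζ
  simpa using this

lemma wordProd_snd (L : List (ZMod κ)) (ζ : Hw κ) : (wordProd κ L ζ).2 = ζ.2 := by
  induction L with
  | nil => rfl
  | cons i L ih => rw [wordProd_cons, Function.comp_apply, sFun_snd, ih]

lemma wordProd_reverse_apply (L : List (ZMod κ)) (ζ : Hw κ) :
    wordProd κ L.reverse (wordProd κ L ζ) = ζ := by
  induction L generalizing ζ with
  | nil => rfl
  | cons i L ih =>
    rw [List.reverse_cons, wordProd_snoc, wordProd_cons, Function.comp_apply,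
      Function.comp_apply, sFun_sFun, ih]

lemma wordProd_injective (L : List (ZMod κ)) : Function.Injective (wordProd κ L) :=
  Function.LeftInverse.injective (wordProd_reverse_apply L)

lemma pairCo_eq (ζ β : Hw κ) : pairCo κ ζ β = ∑ i, β.1 i * pairSimple κ ζ i :=
  finsum_eq_sum_of_fintype _

lemma pairCo_alpha (ζ : Hw κ) (i : ZMod κ) : pairCo κ ζ (alphaR κ i) = pairSimple κ ζ i := by
  simp [pairCo_eq, alphaR, Pi.single_apply]

lemma pairCo_add_left (ζ ξ β : Hw κ) : pairCo κ (ζ + ξ) β = pairCo κ ζ β + pairCo κ ξ β := by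
  simp only [pairCo_eq, pairSimple_add, mul_add, Finset.sum_add_distrib]

lemma pairCo_smul_left (c : ℚ) (ζ β : Hw κ) : pairCo κ (c • ζ) β = c * pairCo κ ζ β := by
  simp only [pairCo_eq, pairSimple_smul, Finset.mul_sum]
  exact Finset.sum_congr rfl fun _ _ => by ring

lemma pairCo_add_right (ζ β γ : Hw κ) : pairCo κ ζ (β + γ) = pairCo κ ζ β + pairCo κ ζ γ := by
  simp only [pairCo_eq, Prod.fst_add, Pi.add_apply, add_mul, Finset.sum_add_distrib]

lemma pairCo_smul_right (c : ℚ) (ζ β : Hw κ) : pairCo κ ζ (c • β) = c * pairCo κ ζ β := by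
  simp only [pairCo_eq, Prod.smul_fst, Pi.smul_apply, smul_eq_mul, Finset.mul_sum]
  exact Finset.sum_congr rfl fun _ _ => by ring

lemma pairCo_neg_right (ζ β : Hw κ) : pairCo κ ζ (-β) = -pairCo κ ζ β := by
  have := pairCo_smul_right (-1) ζ β
  simpa using this

/-- Symmetry of the Cartan matrix, extended linearly to the root lattice. -/
lemma pairCo_alpha_left (i : ZMod κ) {β : Hw κ} (hβ : β.2 = 0) :
    pairCo κ (alphaR κ i) β = pairSimple κ β i := by
  rw [pairCo_eq]
  unfold pairSimple
  rw [hβ, finsum_eq_sum_of_fintype, zero_mul, add_zero]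
  refine Finset.sum_congr rfl fun j _ => ?_
  have : ∑ᶠ k, (alphaR κ i).1 k * cartan κ j k = cartan κ j i := by
    rw [finsum_eq_sum_of_fintype]; simp [alphaR, Pi.single_apply]
  rw [this]
  have h1 : (j - i = 1) ↔ (i - j = -1) := by
    rw [← neg_sub i j, neg_eq_iff_eq_neg]
  have h2 : (j - i = -1) ↔ (i - j = 1) := by
    rw [← neg_sub i j, neg_inj]
  simp only [alphaR, zero_mul, add_zero, cartan, h1, h2, eq_comm (a := j)]
  ring

lemma pairCo_sFun (i : ZMod κ) (ζ : Hw κ) {β : Hw κ} (hβ : β.2 = 0) :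
    pairCo κ (sFun κ i ζ) (sFun κ i β) = pairCo κ ζ β := by
  have h : ∀ ξ : Hw κ, sFun κ i ξ = ξ + (-pairSimple κ ξ i) • alphaR κ i := by
    intro ξ; unfold sFun; rw [neg_smul]; abel
  rw [h, h β]
  simp only [pairCo_add_left, pairCo_add_right, pairCo_smul_left, pairCo_smul_right,
    pairCo_alpha, pairCo_alpha_left i hβ, pairSimple_add, pairSimple_smul,
    pairSimple_alpha_self]
  ring

lemma pairCo_wordProd (L : List (ZMod κ)) (ζ : Hw κ) {β : Hw κ} (hβ : β.2 = 0) :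
    pairCo κ (wordProd κ L ζ) (wordProd κ L β) = pairCo κ ζ β := by
  induction L with
  | nil => rfl
  | cons i L ih =>
    rw [wordProd_cons, Function.comp_apply, Function.comp_apply, pairCo_sFun, ih]
    rw [wordProd_snd, hβ]

/-- Conjugation of reflections: `w s_i w⁻¹ = s_j` as soon as `w α_i = α_j`. -/
lemma wordProd_conj {L : List (ZMod κ)} {i j : ZMod κ}
    (h : wordProd κ L (alphaR κ i) = alphaR κ j) :
    wordProd κ L ∘ sFun κ i = sFun κ j ∘ wordProd κ L := by
  funext ζ
  have e1 : sFun κ i ζ = ζ + (-pairSimple κ ζ i) • alphaR κ i := by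
    unfold sFun; rw [neg_smul]; abel
  have e2 : pairSimple κ (wordProd κ L ζ) j = pairSimple κ ζ i := by
    rw [← pairCo_alpha, ← h, pairCo_wordProd L ζ rfl, pairCo_alpha]
  rw [Function.comp_apply, Function.comp_apply, e1, wordProd_add, wordProd_smul, h]
  unfold sFun
  rw [e2, neg_smul]; abel

lemma sFun_comm {i k : ZMod κ} (h0 : k ≠ i) (h1 : k ≠ i + 1) (h2 : k ≠ i - 1) :
    sFun κ i ∘ sFun κ k = sFun κ k ∘ sFun κ i := by
  have h : wordProd κ [i] (alphaR κ k) = alphaR κ k := by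
    have : pairSimple κ (alphaR κ k) i = 0 :=
      pairSimple_alpha_of_far h0.symm (fun h => h2 (by rw [h]; ring))
        (fun h => h1 (by rw [h]; ring))
    rw [wordProd_singleton]; unfold sFun; rw [this]; simp
  exact wordProd_conj h

/-! ### Real roots as pairs of integers -/

/-- The vector `E b` with `E b - E a = α_{a+1} + ⋯ + α_b` for `a ≤ b` (indices mod `κ`), so that
every real root of type `A_{κ-1}^{(1)}` is a difference `E b - E a`; the coefficient of `E b` at
`i` counts, up to a constant independent of `b`, the integers `≤ b` in the residue class `i`. -/
def rootE (κ : ℕ) (b : ℤ) : Hw κ :=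
  (fun i => (((b - ((i.val : ℕ) : ℤ)) / (κ : ℤ) : ℤ) : ℚ), 0)

/-- The action of `s_i` on the indices of the vectors `E b`: the affine permutation exchanging
`n - 1` and `n` for every `n ≡ i` mod `κ`. -/
def sigma (κ : ℕ) (i : ZMod κ) (b : ℤ) : ℤ :=
  if (b : ZMod κ) = i then b - 1 else if (b : ZMod κ) = i - 1 then b + 1 else b

lemma ediv_sub_pred (x : ℤ) :
    x / (κ : ℤ) - (x - 1) / (κ : ℤ) = if (κ : ℤ) ∣ x then 1 else 0 := by
  have hk : (0 : ℤ) < κ := by exact_mod_cast NeZero.pos κ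
  split_ifs with h
  · obtain ⟨q, rfl⟩ := h
    have h1 : (κ : ℤ) * q / κ = q := Int.mul_ediv_cancel_left _ hk.ne'
    have h2 : ((κ : ℤ) * q - 1) / κ = q - 1 := by
      rw [Int.ediv_eq_iff_of_pos hk]
      constructor <;> nlinarith
    rw [h1, h2]; ring
  · have h1 := Int.emod_add_mul_ediv x κ
    have h2 := Int.emod_nonneg x hk.ne'
    have h3 := Int.emod_lt_of_pos x hk
    have h4 : x % κ ≠ 0 := fun h' => h (Int.dvd_of_emod_eq_zero h')
    have h5 : (x - 1) / (κ : ℤ) = x / κ := by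
      rw [Int.ediv_eq_iff_of_pos hk]
      constructor <;> nlinarith [lt_of_le_of_ne h2 h4.symm]
    rw [h5, sub_self]

/-- Differences of the vectors `E b` may be computed with any integer lift of the index. -/
lemma rootE_sub_apply (a b j : ℤ) :
    (rootE κ b - rootE κ a).1 (j : ZMod κ)
      = (((b - j) / (κ : ℤ) - (a - j) / (κ : ℤ) : ℤ) : ℚ) := by
  have hk : (κ : ℤ) ≠ 0 := by exact_mod_cast NeZero.ne κ
  have hj : ((((j : ZMod κ).val : ℕ) : ℤ)) = j + κ * (-(j / κ)) := by
    rw [ZMod.val_intCast, Int.emod_def]; ring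
  have h : ∀ x : ℤ, (x - ((((j : ZMod κ).val : ℕ) : ℤ))) / (κ : ℤ) = (x - j) / κ + j / κ := by
    intro x
    rw [hj, show x - (j + (κ : ℤ) * (-(j / κ))) = (x - j) + κ * (j / κ) by ring,
      Int.add_mul_ediv_left _ _ hk]
  simp only [rootE, Prod.fst_sub, Pi.sub_apply, h]
  push_cast; ring

lemma intCast_eq_iff_dvd (b j : ℤ) : ((b : ZMod κ) = j) ↔ (κ : ℤ) ∣ b - j := by
  rw [eq_comm, ZMod.intCast_eq_intCast_iff_dvd_sub]

lemma rootE_sub_pred (b : ℤ) : rootE κ b - rootE κ (b - 1) = alphaR κ (b : ZMod κ) := by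
  refine Prod.ext (funext fun i => ?_) (by simp [rootE, alphaR])
  obtain ⟨j, rfl⟩ := ZMod.intCast_surjective i
  rw [rootE_sub_apply, show b - 1 - j = (b - j) - 1 by ring, ediv_sub_pred]
  simp only [alphaR, Pi.single_apply, eq_comm (a := (j : ZMod κ)), intCast_eq_iff_dvd]
  split_ifs <;> simp

lemma rootE_sigma (i : ZMod κ) (b : ℤ) :
    rootE κ (sigma κ i b) = rootE κ b -
      ((if (b : ZMod κ) = i then 1 else 0) - (if (b : ZMod κ) = i - 1 then 1 else 0) : ℚ) •
        alphaR κ i := by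
  unfold sigma
  by_cases h : (b : ZMod κ) = i
  · have h' : (b : ZMod κ) ≠ i - 1 := by rw [h]; exact (pred_ne i).symm
    have := rootE_sub_pred (κ := κ) b
    rw [if_pos h, if_pos h, if_neg h', ← h, ← this]; simp
  · by_cases h' : (b : ZMod κ) = i - 1
    · have := rootE_sub_pred (κ := κ) (b + 1)
      rw [show ((b + 1 : ℤ) : ZMod κ) = i by push_cast; rw [h']; ring,
        add_sub_cancel_right] at this
      rw [if_neg h, if_pos h', if_neg h, if_pos h', ← this]; simp
    · simp [h, h']

lemma pairSimple_rootE_sub (i : ZMod κ) (a b : ℤ) :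
    pairSimple κ (rootE κ b - rootE κ a) i =
      ((if (b : ZMod κ) = i then 1 else 0) - (if (b : ZMod κ) = i - 1 then 1 else 0)) -
      ((if (a : ZMod κ) = i then 1 else 0) - (if (a : ZMod κ) = i - 1 then 1 else 0)) := by
  obtain ⟨j, rfl⟩ := ZMod.intCast_surjective i
  rw [pairSimple_eq, show (j : ZMod κ) - 1 = ((j - 1 : ℤ) : ZMod κ) by push_cast; ring,
    show (j : ZMod κ) + 1 = ((j + 1 : ℤ) : ZMod κ) by push_cast; ring]
  simp only [rootE_sub_apply, intCast_eq_iff_dvd]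
  have f : ∀ x : ℤ, (if (κ : ℤ) ∣ x then (1 : ℚ) else 0)
      = ((x / (κ : ℤ) - (x - 1) / (κ : ℤ) : ℤ) : ℚ) := by
    intro x; rw [ediv_sub_pred]; split_ifs <;> simp
  simp only [f, show ∀ x : ℤ, x - (j + 1) = x - j - 1 by intro x; ring,
    show ∀ x : ℤ, x - (j - 1) - 1 = x - j by intro x; ring]
  simp only [rootE, Prod.snd_sub, sub_zero, zero_mul, add_zero]
  push_cast; ring

lemma sFun_rootE_sub (i : ZMod κ) (a b : ℤ) :
    sFun κ i (rootE κ b - rootE κ a) = rootE κ (sigma κ i b) - rootE κ (sigma κ i a) := by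
  rw [rootE_sigma, rootE_sigma]
  unfold sFun
  rw [pairSimple_rootE_sub, sub_smul]; abel

lemma exists_rootE {β : Hw κ} (hβ : β ∈ Rset κ) : ∃ a b : ℤ, β = rootE κ b - rootE κ a := by
  obtain ⟨L, i, rfl⟩ := hβ
  induction L with
  | nil =>
    obtain ⟨j, rfl⟩ := ZMod.intCast_surjective i
    exact ⟨j - 1, j, (rootE_sub_pred j).symm⟩
  | cons k L ih =>
    obtain ⟨a, b, h⟩ := ih
    exact ⟨sigma κ k a, sigma κ k b, by
      rw [wordProd_cons, Function.comp_apply, h, sFun_rootE_sub]⟩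

lemma rootE_sub_mem_QPos {a b : ℤ} (h : a ≤ b) : rootE κ b - rootE κ a ∈ QPos κ := by
  refine ⟨by simp [rootE], fun i => ?_⟩
  have hk : (0 : ℤ) < κ := by exact_mod_cast NeZero.pos κ
  obtain ⟨j, rfl⟩ := ZMod.intCast_surjective i
  rw [rootE_sub_apply]
  have h1 : (a - j) / (κ : ℤ) ≤ (b - j) / (κ : ℤ) := Int.ediv_le_ediv hk (by omega)
  obtain ⟨n, hn⟩ := Int.eq_ofNat_of_zero_le (sub_nonneg.mpr h1)
  exact ⟨n, by rw [hn]; simp⟩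

lemma root_pos_or_neg {β : Hw κ} (hβ : β ∈ Rset κ) : β ∈ QPos κ ∨ -β ∈ QPos κ := by
  obtain ⟨a, b, rfl⟩ := exists_rootE hβ
  rcases le_total a b with h | h
  · exact Or.inl (rootE_sub_mem_QPos h)
  · right; rw [neg_sub]; exact rootE_sub_mem_QPos h

lemma eq_zero_of_pos_of_neg {β : Hw κ} (h : β ∈ QPos κ) (h' : -β ∈ QPos κ) : β = 0 := by
  refine Prod.ext (funext fun i => ?_) h.1
  obtain ⟨n, hn⟩ := h.2 i
  obtain ⟨k, hk⟩ := h'.2 i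
  have h1 : (0 : ℚ) ≤ n := Nat.cast_nonneg n
  have h2 : (0 : ℚ) ≤ k := Nat.cast_nonneg k
  simp only [Prod.fst_neg, Pi.neg_apply] at hk
  simp only [Prod.fst_zero, Pi.zero_apply]
  linarith

lemma alpha_ne_zero (i : ZMod κ) : alphaR κ i ≠ 0 := by
  intro h
  have : (alphaR κ i).1 i = 0 := by rw [h]; rfl
  simp [alphaR] at this

lemma root_ne_zero {β : Hw κ} (hβ : β ∈ Rset κ) : β ≠ 0 := by
  obtain ⟨L, i, rfl⟩ := hβ
  intro h
  have h0 : wordProd κ L 0 = 0 := by simpa using wordProd_smul L 0 0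
  exact alpha_ne_zero i (wordProd_injective L (h.trans h0.symm))

lemma alpha_mem_Rset (i : ZMod κ) : alphaR κ i ∈ Rset κ := ⟨[], i, rfl⟩

lemma alpha_mem_QPos (i : ZMod κ) : alphaR κ i ∈ QPos κ := by
  refine ⟨rfl, fun j => ?_⟩
  by_cases h : j = i
  · exact ⟨1, by simp [alphaR, h]⟩
  · exact ⟨0, by simp [alphaR, h]⟩

lemma alpha_mem_Rpos (i : ZMod κ) : alphaR κ i ∈ Rpos κ := ⟨alpha_mem_Rset i, alpha_mem_QPos i⟩

lemma wordProd_mem_Rset {β : Hw κ} (hβ : β ∈ Rset κ) (L : List (ZMod κ)) :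
    wordProd κ L β ∈ Rset κ := by
  obtain ⟨L', i, rfl⟩ := hβ
  exact ⟨L ++ L', i, by rw [wordProd_append]; rfl⟩

lemma neg_mem_Rset {β : Hw κ} (hβ : β ∈ Rset κ) : -β ∈ Rset κ := by
  obtain ⟨L, i, rfl⟩ := hβ
  exact ⟨L ++ [i], i, by rw [wordProd_snoc, Function.comp_apply, sFun_alpha, wordProd_neg]⟩

/-- The only positive real root made negative by `s_j` is `α_j`. In terms of `β = E b - E a`: the
permutation `sigma j` moves integers by at most one, so it can only reverse `a < b` if `b = a + 1`
and the two are exchanged. -/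
lemma eq_alpha_of_sFun_neg {β : Hw κ} (hβ : β ∈ Rset κ) (hp : β ∈ QPos κ) {j : ZMod κ}
    (hn : sFun κ j β ∉ QPos κ) : β = alphaR κ j := by
  have hβ0 := root_ne_zero hβ
  obtain ⟨a, b, rfl⟩ := exists_rootE hβ
  have hab : a < b := by
    by_contra h
    refine hβ0 (eq_zero_of_pos_of_neg hp ?_)
    rw [neg_sub]; exact rootE_sub_mem_QPos (not_lt.mp h)
  have hs : sigma κ j b < sigma κ j a := by
    by_contra h
    exact hn (by rw [sFun_rootE_sub]; exact rootE_sub_mem_QPos (not_lt.mp h))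
  have key : a = b - 1 ∧ (b : ZMod κ) = j := by
    unfold sigma at hs
    split_ifs at hs with h1 h2 h3 h4 h5 h6 <;> first | omega | exact ⟨by omega, by assumption⟩
  rw [key.1, rootE_sub_pred, key.2]

/-! ### The exchange property and lengths -/

/-- Exchange: if `w α_i < 0`, a word for `w s_i` arises by deleting one letter of a given word
for `w`. -/
lemma exchange (L : List (ZMod κ)) (i : ZMod κ) (h : wordProd κ L (alphaR κ i) ∉ QPos κ) :
    ∃ L' : List (ZMod κ), L'.length + 1 = L.length ∧
      wordProd κ L' = wordProd κ L ∘ sFun κ i := by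
  induction L with
  | nil => exact absurd (alpha_mem_QPos i) h
  | cons j L ih =>
    by_cases hL : wordProd κ L (alphaR κ i) ∈ QPos κ
    · have h1 : wordProd κ L (alphaR κ i) = alphaR κ j :=
        eq_alpha_of_sFun_neg ⟨L, i, rfl⟩ hL h
      refine ⟨L, rfl, ?_⟩
      rw [wordProd_cons, Function.comp_assoc, wordProd_conj h1, ← Function.comp_assoc,
        sFun_comp_self, Function.id_comp]
    · obtain ⟨L', h1, h2⟩ := ih hL
      exact ⟨j :: L', by simp [h1], by
        rw [wordProd_cons, h2, wordProd_cons, Function.comp_assoc]⟩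

lemma len_le (L : List (ZMod κ)) : len κ (wordProd κ L) ≤ L.length :=
  Nat.sInf_le ⟨L, rfl, rfl⟩

lemma exists_reduced (L : List (ZMod κ)) :
    ∃ L' : List (ZMod κ), L'.length = len κ (wordProd κ L) ∧ wordProd κ L' = wordProd κ L :=
  Nat.sInf_mem (s := {r : ℕ | ∃ L' : List (ZMod κ), L'.length = r ∧
    wordProd κ L' = wordProd κ L}) ⟨L.length, L, rfl, rfl⟩

lemma len_lt_of_neg (L : List (ZMod κ)) (i : ZMod κ)
    (h : wordProd κ L (alphaR κ i) ∉ QPos κ) :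
    len κ (wordProd κ (L ++ [i])) < len κ (wordProd κ L) := by
  obtain ⟨L1, h1, h2⟩ := exists_reduced L
  rw [← h2] at h
  obtain ⟨L', h3, h4⟩ := exchange L1 i h
  have h5 := len_le L'
  rw [h4, h2, ← wordProd_snoc] at h5
  omega

lemma len_eq_of_pos (L : List (ZMod κ)) (i : ZMod κ)
    (h : wordProd κ L (alphaR κ i) ∈ QPos κ) :
    len κ (wordProd κ (L ++ [i])) = len κ (wordProd κ L) + 1 := by
  have h1 : wordProd κ (L ++ [i]) (alphaR κ i) ∉ QPos κ := by
    rw [wordProd_snoc, Function.comp_apply, sFun_alpha, wordProd_neg]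
    intro h'
    exact root_ne_zero ⟨L, i, rfl⟩ (eq_zero_of_pos_of_neg h h')
  have h2 := len_lt_of_neg (L ++ [i]) i h1
  have h3 : wordProd κ (L ++ [i] ++ [i]) = wordProd κ L := by
    rw [wordProd_snoc, wordProd_snoc, Function.comp_assoc, sFun_comp_self, Function.comp_id]
  rw [h3] at h2
  obtain ⟨L1, h4, h5⟩ := exists_reduced L
  have h6 := len_le (L1 ++ [i])
  rw [wordProd_snoc, h5, ← wordProd_snoc, List.length_append, List.length_singleton, h4] at h6
  omega

lemma pos_of_len_eq (L : List (ZMod κ)) (i : ZMod κ)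
    (h : len κ (wordProd κ (L ++ [i])) = len κ (wordProd κ L) + 1) :
    wordProd κ L (alphaR κ i) ∈ QPos κ := by
  by_contra h'
  have := len_lt_of_neg L i h'
  omega

/-! ### Inversion sets -/

/-- Inversion sets grow along the weak right order. -/
lemma invSet_mono_snoc (L : List (ZMod κ)) (i : ZMod κ)
    (h : wordProd κ L (alphaR κ i) ∈ QPos κ) :
    invSet κ (wordProd κ L) ⊆ invSet κ (wordProd κ (L ++ [i])) := by
  rintro β ⟨hβ, γ, hγ, rfl⟩
  refine ⟨hβ, sFun κ i γ, ?_, by rw [wordProd_snoc, Function.comp_apply, sFun_sFun]⟩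
  have e1 : -sFun κ i γ = sFun κ i (-γ) := (wordProd_neg [i] γ).symm
  show -sFun κ i γ ∈ Rpos κ
  rw [e1]
  refine ⟨wordProd_mem_Rset hγ.1 [i], ?_⟩
  by_contra hc
  have h1 : -γ = alphaR κ i := eq_alpha_of_sFun_neg hγ.1 hγ.2 hc
  rw [← h1, wordProd_neg] at h
  exact root_ne_zero hβ.1 (eq_zero_of_pos_of_neg hβ.2 h)

lemma last_mem_invSet (L : List (ZMod κ)) (i : ZMod κ)
    (h : wordProd κ L (alphaR κ i) ∈ QPos κ) :
    wordProd κ L (alphaR κ i) ∈ invSet κ (wordProd κ (L ++ [i])) := by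
  refine ⟨⟨⟨L, i, rfl⟩, h⟩, -alphaR κ i, ?_, ?_⟩
  · show - -alphaR κ i ∈ Rpos κ
    rw [neg_neg]; exact alpha_mem_Rpos i
  · rw [wordProd_neg, wordProd_snoc, Function.comp_apply, sFun_alpha, wordProd_neg, neg_neg]

lemma invSet_mono_wble {v w : Hw κ → Hw κ} (hv : Wmem κ v) (h : wble κ v w) :
    invSet κ v ⊆ invSet κ w ∧ Wmem κ w := by
  induction h with
  | refl => exact ⟨subset_rfl, hv⟩
  | tail _ hs ih =>
    obtain ⟨i, rfl, hlen⟩ := hs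
    obtain ⟨ih1, L, rfl⟩ := ih
    rw [← wordProd_snoc] at hlen
    refine ⟨ih1.trans ?_, L ++ [i], wordProd_snoc L i⟩
    rw [← wordProd_snoc]
    exact invSet_mono_snoc L i (pos_of_len_eq L i hlen)

/-! ### Words whose letters successively pair to `-1` -/

/-- The word `i₁ ⋯ iₙ` is good for `ζ` if `⟨s_{i_{k-1}} ⋯ s_{i₁} ζ, α_{i_k}^∨⟩ = -1` for all `k`. -/
def GoodWord : Hw κ → List (ZMod κ) → Prop
  | _, [] => True
  | ζ, i :: L => pairSimple κ ζ i = -1 ∧ GoodWord (sFun κ i ζ) L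

lemma goodWord_append (ζ : Hw κ) (L L' : List (ZMod κ)) :
    GoodWord ζ (L ++ L') ↔ GoodWord ζ L ∧ GoodWord (wordProd κ L.reverse ζ) L' := by
  induction L generalizing ζ with
  | nil => simp [GoodWord, wordProd_nil]
  | cons i L ih =>
    simp only [List.cons_append, GoodWord, ih, List.reverse_cons, wordProd_snoc,
      Function.comp_apply, and_assoc]

lemma pairSimple_reverse (ζ : Hw κ) (L : List (ZMod κ)) (i : ZMod κ) :
    pairSimple κ (wordProd κ L.reverse ζ) i = pairCo κ ζ (wordProd κ L (alphaR κ i)) := by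
  have h : wordProd κ L (wordProd κ L.reverse ζ) = ζ := by
    simpa using wordProd_reverse_apply L.reverse ζ
  rw [← pairCo_alpha, ← pairCo_wordProd L _ rfl, h]

lemma goodWord_snoc (ζ : Hw κ) (L : List (ZMod κ)) (i : ZMod κ) :
    GoodWord ζ (L ++ [i]) ↔
      GoodWord ζ L ∧ pairCo κ ζ (wordProd κ L (alphaR κ i)) = -1 := by
  rw [goodWord_append, ← pairSimple_reverse]
  simp [GoodWord]

/-- If a word `L` is good for `ζ`, then any root `γ` with `L γ < 0 < γ` satisfies
`⟨ζ, (L γ)^∨⟩ = 1`: at the letter `j` where the sign changes the root is `α_j`. -/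
lemma pairCo_of_sign_change (ζ : Hw κ) (L : List (ZMod κ)) (hL : GoodWord ζ L) {γ : Hw κ}
    (hγ : γ ∈ Rset κ) (hp : γ ∈ QPos κ) (hn : wordProd κ L γ ∉ QPos κ) :
    pairCo κ ζ (wordProd κ L γ) = 1 := by
  induction L generalizing ζ with
  | nil => exact absurd hp hn
  | cons j L ih =>
    have hR := wordProd_mem_Rset hγ L
    have h2 : (wordProd κ L γ).2 = 0 := by rw [wordProd_snd, hp.1]
    by_cases h : wordProd κ L γ ∈ QPos κ
    · have h1 := eq_alpha_of_sFun_neg hR h hn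
      rw [wordProd_cons, Function.comp_apply, h1, sFun_alpha, pairCo_neg_right, pairCo_alpha,
        hL.1]
      norm_num
    · have h3 := ih _ hL.2 h
      rw [wordProd_cons, Function.comp_apply, ← h3, ← pairCo_sFun j ζ (β := sFun κ j _),
        sFun_sFun]
      rw [sFun_snd, h2]

lemma pos_of_goodWord_snoc {ζ : Hw κ} {L : List (ZMod κ)} {i : ZMod κ}
    (h : GoodWord ζ (L ++ [i])) : wordProd κ L (alphaR κ i) ∈ QPos κ := by
  by_contra hn
  obtain ⟨h1, h2⟩ := (goodWord_snoc ζ L i).1 h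
  have h3 := pairCo_of_sign_change ζ L h1 (alpha_mem_Rset i) (alpha_mem_QPos i) hn
  rw [h2] at h3
  norm_num at h3

lemma pairCo_of_mem_invSet {ζ : Hw κ} {L : List (ZMod κ)} (hL : GoodWord ζ L) {β : Hw κ}
    (hβ : β ∈ invSet κ (wordProd κ L)) : pairCo κ ζ β = -1 := by
  obtain ⟨hβ, γ, hγ, rfl⟩ := hβ
  have e : wordProd κ L (-γ) = -wordProd κ L γ := wordProd_neg L γ
  have h1 := pairCo_of_sign_change ζ L hL hγ.1 hγ.2 (by
    rw [e]
    exact fun h => root_ne_zero hβ.1 (eq_zero_of_pos_of_neg hβ.2 h))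
  rw [e, pairCo_neg_right] at h1
  linarith

/-- Good words are reduced, so they give chains in the weak right order. -/
lemma wble_of_goodWord {ζ : Hw κ} (L L' : List (ZMod κ)) (h : GoodWord ζ (L ++ L')) :
    wble κ (wordProd κ L) (wordProd κ (L ++ L')) := by
  induction L' using List.reverseRecOn with
  | nil => rw [List.append_nil]; exact Relation.ReflTransGen.refl
  | append_singleton L' i ih =>
    rw [← List.append_assoc] at h ⊢
    exact (ih ((goodWord_snoc _ _ _).1 h).1).tail
      ⟨i, wordProd_snoc _ _, len_eq_of_pos _ _ (pos_of_goodWord_snoc h)⟩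

/-- An element all of whose inversions pair to `-1` with `ζ` has a good word. -/
lemma exists_goodWord {ζ : Hw κ} {w : Hw κ → Hw κ} (hw : Wmem κ w)
    (h : ∀ β ∈ invSet κ w, pairCo κ ζ β = -1) : ∃ L, GoodWord ζ L ∧ wordProd κ L = w := by
  obtain ⟨L0, rfl⟩ := hw
  obtain ⟨L, h1, h2⟩ := exists_reduced L0
  rw [← h2] at h h1 ⊢
  refine ⟨L, ?_, rfl⟩
  clear h2
  induction L using List.reverseRecOn with
  | nil => trivial
  | append_singleton L i ih =>
    have hpos : wordProd κ L (alphaR κ i) ∈ QPos κ := by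
      by_contra hn
      have := len_lt_of_neg L i hn
      have := len_le L
      rw [List.length_append, List.length_singleton] at h1
      omega
    have hlen := len_eq_of_pos L i hpos
    rw [List.length_append, List.length_singleton] at h1
    exact (goodWord_snoc _ _ _).2
      ⟨ih (fun β hβ => h β (invSet_mono_snoc L i hpos hβ)) (by omega),
        h _ (last_mem_invSet L i hpos)⟩

/-! ### Minuscule weights and completion of good words -/

/-- `ζ = ∑ h_i α_i` whose slopes `h_i - h_{i+1}` take only two values `t` and `t + 1`; then all
pairings with simple coroots lie in `{-1, 0, 1}`. -/
def Minu (ζ : Hw κ) : Prop :=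
  ζ.2 = 0 ∧ ∃ t : ℚ, ∀ i, ζ.1 i - ζ.1 (i + 1) = t ∨ ζ.1 i - ζ.1 (i + 1) = t + 1

lemma sFun_of_pair {ζ : Hw κ} {i : ZMod κ} (h : pairSimple κ ζ i = -1) :
    sFun κ i ζ = ζ + alphaR κ i := by
  unfold sFun; rw [h]; simp

/-- When `⟨ζ, α_i^∨⟩ = -1`, the slope is `t + 1` just before `i` and `t` at `i`. -/
lemma slopes_of_pair {ζ : Hw κ} (h2 : ζ.2 = 0) {t : ℚ}
    (ht : ∀ i, ζ.1 i - ζ.1 (i + 1) = t ∨ ζ.1 i - ζ.1 (i + 1) = t + 1) {i : ZMod κ}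
    (h : pairSimple κ ζ i = -1) :
    ζ.1 i - ζ.1 (i + 1) = t ∧ ζ.1 (i - 1) - ζ.1 i = t + 1 := by
  rw [pairSimple_eq, h2] at h
  have h3 := ht i
  have h4 := ht (i - 1)
  rw [sub_add_cancel] at h4
  rcases h3 with h3 | h3 <;> rcases h4 with h4 | h4 <;> constructor <;> linarith

lemma Minu.sFun {ζ : Hw κ} (hζ : Minu ζ) {i : ZMod κ} (h : pairSimple κ ζ i = -1) :
    Minu (sFun κ i ζ) := by
  obtain ⟨h2, t, ht⟩ := hζ
  obtain ⟨h3, h4⟩ := slopes_of_pair h2 ht h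
  refine ⟨by rw [sFun_snd, h2], t, fun j => ?_⟩
  rw [sFun_of_pair h]
  by_cases hj : j = i
  · subst hj
    right
    simp [alphaR]; linarith
  · by_cases hj' : j + 1 = i
    · have : j = i - 1 := by rw [← hj']; ring
      subst this
      left
      simp [alphaR]; linarith
    · simpa [alphaR, Pi.single_apply, hj, hj'] using ht j

lemma Minu.far {ζ : Hw κ} (hζ : Minu ζ) {i k : ZMod κ} (h : pairSimple κ ζ i = -1)
    (hk : pairSimple κ ζ k = -1) : k ≠ i + 1 ∧ k ≠ i - 1 := by
  obtain ⟨h2, t, ht⟩ := hζ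
  obtain ⟨h3, h4⟩ := slopes_of_pair h2 ht h
  obtain ⟨h5, h6⟩ := slopes_of_pair h2 ht hk
  constructor
  · rintro rfl
    rw [add_sub_cancel_right] at h6
    linarith
  · rintro rfl
    rw [sub_add_cancel] at h5
    linarith

/-- In a good word, the first occurrence of an initially admissible letter `i` commutes with
everything before it, hence can be moved to the front. -/
lemma move_to_front {ζ : Hw κ} (hζ : Minu ζ) {i : ZMod κ} (hi : pairSimple κ ζ i = -1)
    (N1 N2 : List (ZMod κ)) (hN : GoodWord ζ (N1 ++ i :: N2)) (hmem : i ∉ N1) :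
    GoodWord (sFun κ i ζ) (N1 ++ N2) ∧
      wordProd κ (N1 ++ i :: N2) = wordProd κ (i :: (N1 ++ N2)) := by
  induction N1 generalizing ζ with
  | nil => exact ⟨hN.2, rfl⟩
  | cons k N1 ih =>
    have hk : pairSimple κ ζ k = -1 := hN.1
    have hki : k ≠ i := fun h => hmem (by simp [h])
    obtain ⟨hf1, hf2⟩ := hζ.far hi hk
    have hcomm := sFun_comm hki hf1 hf2
    have hi' : pairSimple κ (sFun κ k ζ) i = -1 := by
      rw [sFun_of_pair hk, pairSimple_add, hi, pairSimple_alpha_of_far hki.symm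
        (fun h => hf2 (by rw [h]; ring)) (fun h => hf1 (by rw [h]; ring)), add_zero]
    have hk' : pairSimple κ (sFun κ i ζ) k = -1 := by
      rw [sFun_of_pair hi, pairSimple_add, hk, pairSimple_alpha_of_far hki hf1 hf2, add_zero]
    obtain ⟨h1, h2⟩ := ih (hζ.sFun hk) hi' hN.2 (fun h => hmem (List.mem_cons_of_mem _ h))
    refine ⟨⟨hk', ?_⟩, ?_⟩
    · have := congrFun hcomm ζ
      simp only [Function.comp_apply] at this
      rw [← this]; exact h1
    · rw [List.cons_append, wordProd_cons, h2, wordProd_cons, List.cons_append, wordProd_cons,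
        wordProd_cons, ← Function.comp_assoc, ← hcomm, Function.comp_assoc]

/-- A good word `L` extends to a good word for the same element as any other good word `N`
containing all letters of `L` with multiplicity. -/
lemma exists_completion {ζ : Hw κ} (hζ : Minu ζ) (L N : List (ZMod κ)) (hL : GoodWord ζ L)
    (hN : GoodWord ζ N) (hLN : L.Subperm N) :
    ∃ L', GoodWord ζ (L ++ L') ∧ wordProd κ (L ++ L') = wordProd κ N := by
  induction L generalizing ζ N with
  | nil => exact ⟨N, hN, rfl⟩
  | cons i L ih =>
    have hmem : i ∈ N := hLN.subset (by simp)
    obtain ⟨N1, N2, rfl, hi1⟩ := List.eq_append_cons_of_mem hmem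
    obtain ⟨h1, h2⟩ := move_to_front hζ hL.1 N1 N2 hN hi1
    have h3 : L.Subperm (N1 ++ N2) := by
      rw [List.perm_middle.subperm_left] at hLN
      exact List.subperm_cons i |>.1 hLN
    obtain ⟨L', h4, h5⟩ := ih (hζ.sFun hL.1) (N1 ++ N2) hL.2 h1 h3
    exact ⟨L', ⟨hL.1, h4⟩, by rw [List.cons_append, wordProd_cons, h5, h2, wordProd_cons]⟩

end Weyl

/-! ### Coordinates on the cylinder -/

section Cylinder

variable {m l : ℕ}

lemma exists_pr (x : Cyl m l) : ∃ a b : ℤ, pr m l (a, b) = x := by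
  obtain ⟨⟨a, b⟩, h⟩ := QuotientAddGroup.mk'_surjective _ x
  exact ⟨a, b, h⟩

lemma pr_eq_iff (p q : Z2) :
    pr m l p = pr m l q ↔ ∃ k : ℤ, q.1 = p.1 + k * m ∧ q.2 = p.2 - k * l := by
  have h : pr m l p = pr m l q ↔ -p + q ∈ AddSubgroup.zmultiples (om m l) :=
    QuotientAddGroup.eq
  rw [h, AddSubgroup.mem_zmultiples_iff]
  constructor
  · rintro ⟨k, hk⟩
    have h1 := congrArg Prod.fst hk
    have h2 := congrArg Prod.snd hk
    simp [om] at h1 h2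
    exact ⟨k, by linarith, by linarith⟩
  · rintro ⟨k, h1, h2⟩
    refine ⟨k, Prod.ext ?_ ?_⟩
    · simp [om]; linarith
    · simp [om]; linarith

lemma con_pr (a b : ℤ) : con m l (pr m l (a, b)) = ((b - a : ℤ) : ZMod (m + l)) := rfl

lemma pr_shift (a b k : ℤ) : pr m l (a + k * m, b - k * l) = pr m l (a, b) :=
  ((pr_eq_iff _ _).2 ⟨k, rfl, rfl⟩).symm

/-- Every cell whose content is the class of the integer `j` has a lift on the diagonal
`b - a = j`. -/
lemma exists_pr_of_con {x : Cyl m l} {j : ℤ} (h : con m l x = (j : ZMod (m + l))) :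
    ∃ a : ℤ, x = pr m l (a, a + j) := by
  obtain ⟨a, b, rfl⟩ := exists_pr x
  rw [con_pr, eq_comm, ZMod.intCast_eq_intCast_iff_dvd_sub] at h
  obtain ⟨k, hk⟩ := h
  refine ⟨a + k * m, ?_⟩
  rw [← pr_shift a b k]
  congr 2
  push_cast at hk
  linarith

lemma cle_iff (p q : Z2) :
    cle m l (pr m l p) (pr m l q) ↔
      ∃ k : ℤ, q.1 + k * m ≤ p.1 ∧ q.2 - k * l ≤ p.2 := by
  constructor
  · rintro ⟨a, b, ha, hb, h1, h2⟩
    obtain ⟨s, hs1, hs2⟩ := (pr_eq_iff _ _).1 ha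
    obtain ⟨t, ht1, ht2⟩ := (pr_eq_iff _ _).1 hb
    refine ⟨s - t, ?_, ?_⟩
    · rw [ht1, hs1]; linarith
    · rw [ht2, hs2]; linarith
  · rintro ⟨k, h1, h2⟩
    exact ⟨p, (q.1 + k * m, q.2 - k * l), rfl, pr_shift _ _ k, h1, h2⟩

lemma cle_of_le {a b c d : ℤ} (h1 : c ≤ a) (h2 : d ≤ b) :
    cle m l (pr m l (a, b)) (pr m l (c, d)) :=
  ⟨_, _, rfl, rfl, h1, h2⟩

/-! ### Profiles of cylindric diagrams -/

/-- `H` is the profile of `θ`: on the diagonal of content `j` the cells of the lift of `θ` to `ℤ²`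
are the `(a, a + j)` with `a ≤ H j`. -/
def Rep (θ : Set (Cyl m l)) (H : ℤ → ℤ) : Prop :=
  ∀ a b : ℤ, pr m l (a, b) ∈ θ ↔ a ≤ H (b - a)

/-- `θ` is an order filter of the cylinder. -/
def Filt (θ : Set (Cyl m l)) : Prop := ∀ x ∈ θ, ∀ y, cle m l x y → y ∈ θ

lemma exists_rep {θ : Set (Cyl m l)} (hθ : IsCylindric m l θ) : ∃ H, Rep θ H := by
  obtain ⟨⟨x, hx⟩, hne, hf⟩ := hθ
  obtain ⟨a0, b0, rfl⟩ := exists_pr x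
  obtain ⟨y, hy⟩ := (Set.ne_univ_iff_exists_notMem θ).1 hne
  obtain ⟨a1, b1, rfl⟩ := exists_pr y
  have key : ∀ j : ℤ, ∃ h : ℤ, pr m l (h, h + j) ∈ θ ∧
      ∀ a : ℤ, pr m l (a, a + j) ∈ θ → a ≤ h := by
    intro j
    refine Int.exists_greatest_of_bdd ⟨max a1 (b1 - j), fun a ha => ?_⟩
      ⟨min a0 (b0 - j), ?_⟩
    · by_contra hlt
      have h3 := not_le.1 hlt
      have h1 : a1 < a := lt_of_le_of_lt (le_max_left _ _) h3
      have h2 : b1 - j < a := lt_of_le_of_lt (le_max_right _ _) h3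
      exact hy (hf _ ha _ (cle_of_le h1.le (by linarith)))
    · have h1 : min a0 (b0 - j) ≤ a0 := min_le_left _ _
      have h2 : min a0 (b0 - j) ≤ b0 - j := min_le_right _ _
      exact hf _ hx _ (cle_of_le h1 (by linarith))
  choose H h1 h2 using key
  refine ⟨H, fun a b => ⟨fun h => h2 _ _ (by rwa [add_sub_cancel]), fun h => ?_⟩⟩
  refine hf _ (h1 (b - a)) _ (cle_of_le h (by linarith))

lemma Rep.succ_le {θ : Set (Cyl m l)} {H : ℤ → ℤ} (hH : Rep θ H) (hf : Filt θ) (j : ℤ) :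
    H (j + 1) ≤ H j := by
  have h1 : pr m l (H (j + 1), H (j + 1) + (j + 1)) ∈ θ := (hH _ _).2 (by simp)
  have h2 := hf _ h1 (pr m l (H (j + 1), H (j + 1) + j)) (cle_of_le le_rfl (by linarith))
  simpa using (hH _ _).1 h2

lemma Rep.le_succ {θ : Set (Cyl m l)} {H : ℤ → ℤ} (hH : Rep θ H) (hf : Filt θ) (j : ℤ) :
    H j - 1 ≤ H (j + 1) := by
  have h1 : pr m l (H j, H j + j) ∈ θ := (hH _ _).2 (by simp)
  have h2 := hf _ h1 (pr m l (H j - 1, H j + j)) (cle_of_le (by linarith) le_rfl)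
  have h3 := (hH _ _).1 h2
  rwa [show H j + j - (H j - 1) = j + 1 by ring] at h3

lemma Rep.antitone {θ : Set (Cyl m l)} {H : ℤ → ℤ} (hH : Rep θ H) (hf : Filt θ) :
    Antitone H := antitone_int_of_succ_le fun j => hH.succ_le hf j

lemma Rep.add_mono {θ : Set (Cyl m l)} {H : ℤ → ℤ} (hH : Rep θ H) (hf : Filt θ) :
    Monotone fun j => H j + j :=
  monotone_int_of_le_succ fun j => by have := hH.le_succ hf j; linarith

lemma Rep.period {θ : Set (Cyl m l)} {H : ℤ → ℤ} (hH : Rep θ H) (j k : ℤ) :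
    H (j - k * (m + l)) = H j + k * m := by
  have h : ∀ a : ℤ, a ≤ H j ↔ a + k * m ≤ H (j - k * (m + l)) := by
    intro a
    have h1 := hH a (a + j)
    have h2 := hH (a + k * m) (a + j - k * l)
    rw [pr_shift, h1, add_sub_cancel_left,
      show a + j - k * l - (a + k * m) = j - k * (m + l) by ring] at h2
    exact h2
  have h1 := (h (H j)).1 le_rfl
  have h2 := (h (H (j - k * (m + l)) - k * m)).2 (by linarith)
  linarith

/-- The cell at the bottom of the diagonal `j`. -/
def bot (m l : ℕ) (H : ℤ → ℤ) (j : ℤ) : Cyl m l := pr m l (H j, H j + j)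

lemma con_bot (H : ℤ → ℤ) (j : ℤ) : con m l (bot m l H j) = (j : ZMod (m + l)) := by
  rw [bot, con_pr, add_sub_cancel_left]

lemma Rep.bot_shift {θ : Set (Cyl m l)} {H : ℤ → ℤ} (hH : Rep θ H) (j k : ℤ) :
    bot m l H (j - k * (m + l)) = bot m l H j := by
  unfold bot
  rw [hH.period, ← pr_shift (H j) (H j + j) k]
  congr 2
  ring

lemma cle_antisymm (hm : 1 ≤ m) (hl : 1 ≤ l) {x y : Cyl m l} (h : cle m l x y)
    (h' : cle m l y x) : x = y := by
  obtain ⟨a, b, rfl⟩ := exists_pr x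
  obtain ⟨c, d, rfl⟩ := exists_pr y
  obtain ⟨k, h1, h2⟩ := (cle_iff _ _).1 h
  obtain ⟨k', h3, h4⟩ := (cle_iff _ _).1 h'
  simp only at h1 h2 h3 h4
  have hm' : (1 : ℤ) ≤ m := by exact_mod_cast hm
  have hl' : (1 : ℤ) ≤ l := by exact_mod_cast hl
  have h5 : k + k' = 0 := by
    have e1 : (k + k') * m ≤ 0 := by linarith
    have e2 : 0 ≤ (k + k') * l := by linarith
    have e3 : k + k' ≤ 0 := by nlinarith
    have e4 : 0 ≤ k + k' := by nlinarith
    omega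
  obtain rfl : k' = -k := by omega
  refine (pr_eq_iff _ _).2 ⟨-k, ?_, ?_⟩ <;> simp only <;> linarith

lemma Rep.isBottomCell_iff (hm : 1 ≤ m) (hl : 1 ≤ l) {θ : Set (Cyl m l)} {H : ℤ → ℤ}
    (hH : Rep θ H) (j : ℤ) (x : Cyl m l) :
    IsBottomCell m l θ (j : ZMod (m + l)) x ↔ x = bot m l H j := by
  have hb : IsBottomCell m l θ (j : ZMod (m + l)) (bot m l H j) := by
    refine ⟨(hH _ _).2 (by simp), con_bot H j, fun y hy hc => ?_⟩
    obtain ⟨a, rfl⟩ := exists_pr_of_con hc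
    have := (hH _ _).1 hy
    rw [add_sub_cancel_left] at this
    exact cle_of_le this (by linarith)
  constructor
  · rintro ⟨h1, h2, h3⟩
    exact cle_antisymm hm hl (h3 _ hb.1 hb.2.1) (hb.2.2 _ h1 h2)
  · rintro rfl
    exact hb

lemma Rep.mem_btm_iff (hm : 1 ≤ m) (hl : 1 ≤ l) {θ : Set (Cyl m l)} {H : ℤ → ℤ}
    (hH : Rep θ H) (x : Cyl m l) : x ∈ btm m l θ ↔ ∃ j, x = bot m l H j := by
  constructor
  · rintro ⟨i, hi⟩
    obtain ⟨j, rfl⟩ := ZMod.intCast_surjective i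
    exact ⟨j, (hH.isBottomCell_iff hm hl j x).1 hi⟩
  · rintro ⟨j, hj⟩
    exact ⟨j, (hH.isBottomCell_iff hm hl j x).2 hj⟩

lemma intCast_succ_ne (hm : 1 ≤ m) (hl : 1 ≤ l) (j : ℤ) :
    ((j + 1 : ℤ) : ZMod (m + l)) ≠ (j : ZMod (m + l)) := by
  have : Fact (1 < m + l) := ⟨by omega⟩
  push_cast; simp

lemma bot_succ_ne (hm : 1 ≤ m) (hl : 1 ≤ l) (H : ℤ → ℤ) (j : ℤ) :
    bot m l H (j + 1) ≠ bot m l H j := by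
  intro h
  have := congrArg (con m l) h
  rw [con_bot, con_bot] at this
  exact intCast_succ_ne hm hl j this

lemma Rep.cle_bot {θ : Set (Cyl m l)} {H : ℤ → ℤ} (hH : Rep θ H) {j j' : ℤ}
    (h : cle m l (bot m l H j) (bot m l H j')) :
    ∃ j'' : ℤ, bot m l H j'' = bot m l H j' ∧ H j'' ≤ H j ∧ H j'' + j'' ≤ H j + j := by
  obtain ⟨k, h1, h2⟩ := (cle_iff _ _).1 h
  refine ⟨j' - k * (m + l), hH.bot_shift j' k, ?_, ?_⟩
  · rw [hH.period]; exact h1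
  · rw [hH.period]; simp only at h2; linarith

lemma Rep.cle_bot' {θ : Set (Cyl m l)} {H : ℤ → ℤ} (hH : Rep θ H) {j j' : ℤ}
    (h : cle m l (bot m l H j') (bot m l H j)) :
    ∃ j'' : ℤ, bot m l H j'' = bot m l H j' ∧ H j ≤ H j'' ∧ H j + j ≤ H j'' + j'' := by
  obtain ⟨k, h1, h2⟩ := (cle_iff _ _).1 h
  refine ⟨j' - (-k) * (m + l), hH.bot_shift j' (-k), ?_, ?_⟩
  · rw [hH.period]; simp only at h1; linarith
  · rw [hH.period]; simp only at h2; linarith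

/-- The boundary of `θ` is a zigzag with unit steps, so a bottom cell is maximal iff both its
neighbours on the boundary are smaller. -/
lemma Rep.bot_mem_max (hm : 1 ≤ m) (hl : 1 ≤ l) {θ : Set (Cyl m l)} {H : ℤ → ℤ}
    (hH : Rep θ H) (hf : Filt θ) (j : ℤ) :
    bot m l H j ∈ btmMax m l θ ↔ H (j + 1) = H j ∧ H (j - 1) = H j + 1 := by
  have a1 := hH.succ_le hf j
  have a2 := hH.le_succ hf j
  have a3 := hH.succ_le hf (j - 1)
  have a4 := hH.le_succ hf (j - 1)
  rw [sub_add_cancel] at a3 a4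
  constructor
  · rintro ⟨-, hmax⟩
    constructor
    · by_contra hne
      have h1 : H (j + 1) = H j - 1 := by omega
      refine bot_succ_ne hm hl H j (hmax _ ((hH.mem_btm_iff hm hl _).2 ⟨_, rfl⟩) ?_)
      exact cle_of_le a1 (by linarith)
    · by_contra hne
      have h1 : H (j - 1) = H j := by omega
      have h2 := bot_succ_ne hm hl H (j - 1)
      rw [sub_add_cancel] at h2
      refine h2 (hmax _ ((hH.mem_btm_iff hm hl _).2 ⟨_, rfl⟩) ?_).symm
      exact cle_of_le (by linarith) (by linarith)
  · rintro ⟨h1, h2⟩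
    refine ⟨(hH.mem_btm_iff hm hl _).2 ⟨_, rfl⟩, fun y hy hle => ?_⟩
    obtain ⟨j', rfl⟩ := (hH.mem_btm_iff hm hl _).1 hy
    obtain ⟨i, h3, h4, h5⟩ := hH.cle_bot hle
    rw [← h3]
    rcases lt_trichotomy i j with h | h | h
    · have := hH.antitone hf (show i ≤ j - 1 by omega); omega
    · rw [h]
    · have := hH.add_mono hf (show j + 1 ≤ i by omega); simp only at this; omega

lemma Rep.bot_mem_min (hm : 1 ≤ m) (hl : 1 ≤ l) {θ : Set (Cyl m l)} {H : ℤ → ℤ}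
    (hH : Rep θ H) (hf : Filt θ) (j : ℤ) :
    bot m l H j ∈ btmMin m l θ ↔ H (j + 1) = H j - 1 ∧ H (j - 1) = H j := by
  have a1 := hH.succ_le hf j
  have a2 := hH.le_succ hf j
  have a3 := hH.succ_le hf (j - 1)
  have a4 := hH.le_succ hf (j - 1)
  rw [sub_add_cancel] at a3 a4
  constructor
  · rintro ⟨-, hmin⟩
    constructor
    · by_contra hne
      have h1 : H (j + 1) = H j := by omega
      refine bot_succ_ne hm hl H j (hmin _ ((hH.mem_btm_iff hm hl _).2 ⟨_, rfl⟩) ?_)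
      exact cle_of_le (by linarith) (by linarith)
    · by_contra hne
      have h1 : H (j - 1) = H j + 1 := by omega
      have h2 := bot_succ_ne hm hl H (j - 1)
      rw [sub_add_cancel] at h2
      refine h2 (hmin _ ((hH.mem_btm_iff hm hl _).2 ⟨_, rfl⟩) ?_).symm
      exact cle_of_le (by linarith) (by linarith)
  · rintro ⟨h1, h2⟩
    refine ⟨(hH.mem_btm_iff hm hl _).2 ⟨_, rfl⟩, fun y hy hle => ?_⟩
    obtain ⟨j', rfl⟩ := (hH.mem_btm_iff hm hl _).1 hy
    obtain ⟨i, h3, h4, h5⟩ := hH.cle_bot' hle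
    rw [← h3]
    rcases lt_trichotomy i j with h | h | h
    · have := hH.add_mono hf (show i ≤ j - 1 by omega); simp only at this; omega
    · rw [h]
    · have := hH.antitone hf (show j + 1 ≤ i by omega); omega

/-- The coefficients of `P_θ` are the second differences of the profile. -/
lemma Rep.aC_eq (hm : 1 ≤ m) (hl : 1 ≤ l) {θ : Set (Cyl m l)} {H : ℤ → ℤ}
    (hH : Rep θ H) (hf : Filt θ) (j : ℤ) :
    aC m l θ (j : ZMod (m + l)) = ((H (j + 1) + H (j - 1) - 2 * H j : ℤ) : ℚ) := by
  have a1 := hH.succ_le hf j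
  have a2 := hH.le_succ hf j
  have a3 := hH.succ_le hf (j - 1)
  have a4 := hH.le_succ hf (j - 1)
  rw [sub_add_cancel] at a3 a4
  unfold aC
  simp only [hH.isBottomCell_iff hm hl, exists_eq_left, hH.bot_mem_max hm hl hf,
    hH.bot_mem_min hm hl hf]
  split_ifs with h1 h2
  · rw [h1.1, h1.2]; push_cast; ring
  · rw [h2.1, h2.2]; push_cast; ring
  · have : H (j + 1) + H (j - 1) - 2 * H j = 0 := by omega
    rw [this]; simp

/-! ### The weight attached to a diagram -/

/-- `ζ` is the weight `∑ h_i α_i` with `h_j = -H(j) - m j / κ`, where `H` is the profile of `θ`.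
The linear correction makes `h` periodic; its second difference vanishes, so `ζ` has the same
pairings with coroots as `P_θ`. -/
def Wt (θ : Set (Cyl m l)) (H : ℤ → ℤ) (ζ : Hw (m + l)) : Prop :=
  Rep θ H ∧ ζ.2 = 0 ∧
    ∀ j : ℤ, ζ.1 (j : ZMod (m + l)) = -(H j : ℚ) - (m : ℚ) * j / ((m + l : ℕ) : ℚ)

lemma exists_wt (hm : 1 ≤ m) {θ : Set (Cyl m l)} {H : ℤ → ℤ} (hH : Rep θ H) :
    ∃ ζ, Wt θ H ζ := by
  have : NeZero (m + l) := ⟨by omega⟩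
  have hk : ((m + l : ℕ) : ℚ) ≠ 0 := by exact_mod_cast NeZero.ne (m + l)
  refine ⟨(fun i => -(H ((i.val : ℕ) : ℤ) : ℚ)
    - (m : ℚ) * ((i.val : ℕ) : ℤ) / ((m + l : ℕ) : ℚ), 0), hH, rfl, fun j => ?_⟩
  have hj : ((((j : ZMod (m + l)).val : ℕ) : ℤ)) = j - (j / ((m + l : ℕ) : ℤ)) * (m + l) := by
    rw [ZMod.val_intCast, Int.emod_def]; push_cast; ring
  simp only [hj]
  rw [hH.period]
  push_cast at hk ⊢
  field_simp
  ring

lemma Wt.pairSimple_eq [NeZero (m + l)] [Fact (1 < m + l)] {θ : Set (Cyl m l)} {H : ℤ → ℤ}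
    {ζ : Hw (m + l)} (h : Wt θ H ζ) (j : ℤ) :
    pairSimple (m + l) ζ (j : ZMod (m + l)) = ((H (j + 1) + H (j - 1) - 2 * H j : ℤ) : ℚ) := by
  obtain ⟨-, h2, h3⟩ := h
  rw [CylPaper.pairSimple_eq, h2,
    show (j : ZMod (m + l)) - 1 = ((j - 1 : ℤ) : ZMod (m + l)) by push_cast; ring,
    show (j : ZMod (m + l)) + 1 = ((j + 1 : ℤ) : ZMod (m + l)) by push_cast; ring, h3, h3, h3]
  push_cast
  ring

lemma Wt.minu [NeZero (m + l)] [Fact (1 < m + l)] {θ : Set (Cyl m l)} {H : ℤ → ℤ}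
    {ζ : Hw (m + l)} (h : Wt θ H ζ) (hf : Filt θ) : Minu ζ := by
  obtain ⟨hH, h2, h3⟩ := h
  refine ⟨h2, (m : ℚ) / ((m + l : ℕ) : ℚ) - 1, fun i => ?_⟩
  obtain ⟨j, rfl⟩ := ZMod.intCast_surjective i
  rw [show (j : ZMod (m + l)) + 1 = ((j + 1 : ℤ) : ZMod (m + l)) by push_cast; ring, h3, h3]
  have a1 := hH.succ_le hf j
  have a2 := hH.le_succ hf j
  have h4 : H (j + 1) = H j - 1 ∨ H (j + 1) = H j := by omega
  rcases h4 with h4 | h4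
  · left; rw [h4]; push_cast; ring
  · right; rw [h4]; push_cast; ring

lemma pr_succ_ne (hm : 1 ≤ m) (hl : 1 ≤ l) (a b : ℤ) :
    pr m l (a + 1, b + 1) ≠ pr m l (a, b) := by
  intro h
  obtain ⟨k, h1, h2⟩ := (pr_eq_iff _ _).1 h
  simp only at h1 h2
  have hm' : (1 : ℤ) ≤ m := by exact_mod_cast hm
  have hl' : (1 : ℤ) ≤ l := by exact_mod_cast hl
  rcases lt_trichotomy k 0 with h | h | h
  · nlinarith
  · subst h; linarith
  · nlinarith

/-- Removing a minimal cell `x` of `θ`: its content pairs to `-1` with the weight of `θ`, and the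
weight of `θ ∖ {x}` is the reflected one. -/
lemma Wt.step (hm : 1 ≤ m) (hl : 1 ≤ l) [NeZero (m + l)] [Fact (1 < m + l)]
    {θ : Set (Cyl m l)} {H : ℤ → ℤ} {ζ : Hw (m + l)} (h : Wt θ H ζ) (hf : Filt θ)
    {x : Cyl m l} (hx : x ∈ θ) (hmin : ∀ y ∈ θ, cle m l y x → y = x) :
    pairSimple (m + l) ζ (con m l x) = -1 ∧
      (∃ H', Wt (θ \ {x}) H' (sFun (m + l) (con m l x) ζ)) ∧ Filt (θ \ {x}) := by
  obtain ⟨j, hj⟩ := ZMod.intCast_surjective (con m l x)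
  obtain ⟨a, rfl⟩ := exists_pr_of_con hj.symm
  have hH := h.1
  have a1 := hH.succ_le hf j
  have a2 := hH.le_succ hf j
  have a3 := hH.succ_le hf (j - 1)
  have a4 := hH.le_succ hf (j - 1)
  rw [sub_add_cancel] at a3 a4
  have hle : a ≤ H j := by simpa using (hH _ _).1 hx
  have haH : a = H j := by
    by_contra hne
    have h1 : a + 1 ≤ H j := by omega
    have h2 : pr m l (a + 1, a + j + 1) ∈ θ :=
      (hH _ _).2 (by rwa [show a + j + 1 - (a + 1) = j by ring])
    exact pr_succ_ne hm hl _ _ (hmin _ h2 (cle_of_le (by linarith) (by linarith)))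
  subst haH
  have b1 : H (j + 1) = H j - 1 := by
    by_contra hne
    have h1 : H (j + 1) = H j := by omega
    refine bot_succ_ne hm hl H j (hmin _ ((hH _ _).2 (by simp)) ?_)
    exact cle_of_le (by linarith) (by linarith)
  have b2 : H (j - 1) = H j := by
    by_contra hne
    have h1 : H (j - 1) = H j + 1 := by omega
    have h2 := bot_succ_ne hm hl H (j - 1)
    rw [sub_add_cancel] at h2
    refine h2 (hmin _ ((hH _ _).2 (by simp)) ?_).symm
    exact cle_of_le (by linarith) (by linarith)
  have hpair : pairSimple (m + l) ζ (j : ZMod (m + l)) = -1 := by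
    rw [h.pairSimple_eq, b1, b2]; push_cast; ring
  rw [← hj]
  refine ⟨hpair, ⟨fun k => H k - if (k : ZMod (m + l)) = j then 1 else 0, ?_, ?_, ?_⟩, ?_⟩
  · intro a b
    rw [Set.mem_sdiff, Set.mem_singleton_iff, hH a b]
    have key : pr m l (a, b) = pr m l (H j, H j + j) ↔
        ((b - a : ℤ) : ZMod (m + l)) = j ∧ a = H (b - a) := by
      constructor
      · intro he
        obtain ⟨k, h1, h2⟩ := (pr_eq_iff _ _).1 he
        simp only at h1 h2
        have h3 : j = (b - a) - k * (m + l) := by linarith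
        have h4 := hH.period (b - a) k
        rw [← h3] at h4
        refine ⟨?_, by linarith⟩
        have := congrArg (con m l) he
        rwa [con_pr, con_pr, add_sub_cancel_left] at this
      · rintro ⟨h1, h2⟩
        have h3 := (hH.isBottomCell_iff hm hl (b - a) _).2 rfl
        rw [h1, hH.isBottomCell_iff hm hl] at h3
        unfold bot at h3
        rw [← h3, ← h2]
        congr 2; ring
    rw [key]
    by_cases hc : ((b - a : ℤ) : ZMod (m + l)) = j
    · simp only [hc, true_and, if_true]; omega
    · simp only [hc, false_and, not_false_eq_true, and_true, if_false, sub_zero]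
  · rw [sFun_snd, h.2.1]
  · intro k
    rw [sFun_of_pair hpair, Prod.fst_add, Pi.add_apply, h.2.2 k]
    by_cases hc : (k : ZMod (m + l)) = j
    · simp only [hc, alphaR, Pi.single_eq_same, if_true]; push_cast; ring
    · simp only [hc, alphaR, if_false, Pi.single_eq_of_ne hc]; push_cast; ring
  · rintro y ⟨hy, hyx⟩ z hyz
    refine ⟨hf y hy z hyz, ?_⟩
    rintro rfl
    exact hyx (hmin y hy hyz)

/-! ### Tableaux give good words containing every letter infinitely often -/

lemma tabWord_succ (e : ℕ → Cyl m l) (n : ℕ) :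
    tabWord m l e (n + 1) = tabWord m l e n ++ [con m l (e (n + 1))] := by
  unfold tabWord; rw [List.range_succ, List.map_append]; rfl

lemma tabWord_prefix (e : ℕ → Cyl m l) {n n' : ℕ} (h : n ≤ n') :
    tabWord m l e n <+: tabWord m l e n' := by
  induction h with
  | refl => exact List.prefix_rfl
  | step _ ih => rw [Nat.succ_eq_add_one, tabWord_succ]; exact ih.trans (List.prefix_append _ _)

lemma tabWord_good (hm : 1 ≤ m) (hl : 1 ≤ l) [NeZero (m + l)] [Fact (1 < m + l)]
    {θ : Set (Cyl m l)} {H : ℤ → ℤ} {ζ : Hw (m + l)} (h : Wt θ H ζ) (hf : Filt θ)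
    {e : ℕ → Cyl m l} (he : IsTableau m l θ e) (n : ℕ) :
    GoodWord ζ (tabWord m l e n) := by
  obtain ⟨hinj, himg, hord⟩ := he
  -- the weight after removing the cells `e 1, …, e n` is that of the remaining filter
  suffices hs : GoodWord ζ (tabWord m l e n) ∧
      (∃ H', Wt (e '' {a | n + 1 ≤ a}) H' (wordProd (m + l) (tabWord m l e n).reverse ζ)) ∧
      Filt (e '' {a | n + 1 ≤ a}) from hs.1
  induction n with
  | zero =>
    have h0 : e '' {a | 0 + 1 ≤ a} = θ := himg
    rw [h0]
    exact ⟨trivial, ⟨H, h⟩, hf⟩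
  | succ n ih =>
    obtain ⟨h1, ⟨H', h2⟩, h3⟩ := ih
    have hx : e (n + 1) ∈ e '' {a | n + 1 ≤ a} := ⟨n + 1, show n + 1 ≤ n + 1 from le_rfl, rfl⟩
    have hmin : ∀ y ∈ e '' {a | n + 1 ≤ a}, cle m l y (e (n + 1)) → y = e (n + 1) := by
      rintro _ ⟨a, ha, rfl⟩ hle
      by_contra hne
      have ha' : n + 1 ≤ a := ha
      have := hord a (n + 1) (by omega) (by omega) hle hne
      omega
    obtain ⟨h4, h5, h6⟩ := h2.step hm hl h3 hx hmin
    have hset : e '' {a | n + 1 ≤ a} \ {e (n + 1)} = e '' {a | n + 1 + 1 ≤ a} := by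
      ext y
      constructor
      · rintro ⟨⟨a, ha, rfl⟩, hne⟩
        have ha' : n + 1 ≤ a := ha
        refine ⟨a, ?_, rfl⟩
        have : a ≠ n + 1 := fun h => hne (by rw [h]; rfl)
        show n + 1 + 1 ≤ a
        omega
      · rintro ⟨a, ha, rfl⟩
        have ha' : n + 1 + 1 ≤ a := ha
        refine ⟨⟨a, show n + 1 ≤ a by omega, rfl⟩, fun h => ?_⟩
        have := hinj (show 1 ≤ a by omega) (show 1 ≤ n + 1 by omega) h
        omega
    rw [hset] at h5 h6
    rw [tabWord_succ]
    refine ⟨(goodWord_append _ _ _).2 ⟨h1, h4, trivial⟩, ?_, h6⟩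
    rw [List.reverse_append, List.reverse_singleton, List.singleton_append, wordProd_cons]
    exact h5

lemma exists_content (hm : 1 ≤ m) (hl : 1 ≤ l) {θ : Set (Cyl m l)} {H : ℤ → ℤ} (hH : Rep θ H)
    {e : ℕ → Cyl m l} (he : IsTableau m l θ e) (i : ZMod (m + l)) (n : ℕ) :
    ∃ n' ≥ n, con m l (e (n' + 1)) = i := by
  by_contra hno
  push Not at hno
  obtain ⟨j, rfl⟩ := ZMod.intCast_surjective i
  -- the cells of content `j` form an infinite chain, but would all lie among `e 1, …, e n`
  let g : ℕ → Cyl m l := fun t => pr m l (H j - t, H j - t + j)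
  have hg : Function.Injective g := by
    intro s t hst
    obtain ⟨k, h1, h2⟩ := (pr_eq_iff _ _).1 hst
    simp only at h1 h2
    have hk : k * ((m : ℤ) + l) = 0 := by linarith
    have hk0 : k = 0 := by
      rcases mul_eq_zero.1 hk with h | h
      · exact h
      · omega
    subst hk0
    omega
  have hsub : Set.range g ⊆ e '' (Set.Iic n) := by
    rintro _ ⟨t, rfl⟩
    have hmem : g t ∈ θ := (hH _ _).2 (by rw [add_sub_cancel_left]; omega)
    rw [← he.2.1] at hmem
    obtain ⟨a, ha, hea⟩ := hmem
    refine ⟨a, ?_, hea⟩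
    by_contra hlt
    have hlt' : n < a := not_le.1 hlt
    refine hno (a - 1) (by omega) ?_
    rw [Nat.sub_add_cancel (by omega), hea]
    show con m l (pr m l _) = _
    rw [con_pr, add_sub_cancel_left]
  exact Set.infinite_range_of_injective hg (((Set.finite_Iic n).image e).subset hsub)

lemma exists_subperm_tabWord (hm : 1 ≤ m) (hl : 1 ≤ l) {θ : Set (Cyl m l)} {H : ℤ → ℤ}
    (hH : Rep θ H) {e : ℕ → Cyl m l} (he : IsTableau m l θ e) (L : List (ZMod (m + l))) :
    ∃ n, 1 ≤ n ∧ L.Subperm (tabWord m l e n) := by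
  induction L with
  | nil => exact ⟨1, le_rfl, List.nil_subperm⟩
  | cons i L ih =>
    obtain ⟨n, -, hn⟩ := ih
    obtain ⟨n', hle, hc⟩ := exists_content hm hl hH he i n
    refine ⟨n' + 1, by omega, ?_⟩
    rw [tabWord_succ, hc, (List.perm_append_singleton i _).subperm_left, List.subperm_cons]
    exact hn.trans (tabWord_prefix e hle).sublist.subperm

end Cylinder

/-- Proposition 4.8: [e, w_θ) = {w ∈ W : w is P_θ-pluscule}. -/
theorem statement_19 (m l : ℕ) (hm : 1 ≤ m) (hl : 1 ≤ l)
    (θ : Set (Cyl m l)) (hθ : IsCylindric m l θ)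
    (e : ℕ → Cyl m l) (he : IsTableau m l θ e) :
    semiInt m l e = {w | Wmem (m + l) w ∧ Pluscule m l θ w} := by
  have : NeZero (m + l) := ⟨by omega⟩
  have : Fact (1 < m + l) := ⟨by omega⟩
  have hf : Filt θ := hθ.2.2
  obtain ⟨H, hH⟩ := exists_rep hθ
  obtain ⟨ζ, hζ⟩ := exists_wt hm hH
  have hP : ∀ β : Hw (m + l), pairP m l θ β = pairCo (m + l) ζ β := by
    intro β
    unfold pairP pairCo
    refine finsum_congr fun i => ?_
    obtain ⟨j, rfl⟩ := ZMod.intCast_surjective i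
    rw [hH.aC_eq hm hl hf, hζ.pairSimple_eq, mul_comm]
  ext w
  simp only [semiInt, Set.mem_iUnion, Set.mem_ofPred_eq, exists_prop, bint]
  constructor
  · rintro ⟨n, -, h1, h2⟩
    have hw : Wmem (m + l) w := (invSet_mono_wble ⟨[], rfl⟩ h1).2
    refine ⟨hw, fun β hβ => ?_⟩
    rw [hP]
    exact pairCo_of_mem_invSet (tabWord_good hm hl hζ hf he n) ((invSet_mono_wble hw h2).1 hβ)
  · rintro ⟨hw, hpl⟩
    obtain ⟨L, hL, rfl⟩ := exists_goodWord hw (ζ := ζ) fun β hβ => by rw [← hP]; exact hpl β hβ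
    obtain ⟨n, hn, hsub⟩ := exists_subperm_tabWord hm hl hH he L
    obtain ⟨L', h1, h2⟩ := exists_completion (hζ.minu hf) L _ hL
      (tabWord_good hm hl hζ hf he n) hsub
    refine ⟨n, hn, wble_of_goodWord [] L hL, ?_⟩
    rw [← h2]
    exact wble_of_goodWord L L' h1

end CylPaper
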